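/- Let Ω = {(x, y) ∈ ℝ² : x² + y² ≤ 1} be the closed unit disc. Then sup{ ‖u_x‖₁ / ‖u_y‖₁ : u ∈ 𝒰_Ω, u ≢ 0 } = 2, and the supremum is not attained by any u ∈ 𝒰_Ω. -/

import Mathlib

open Set MeasureTheory
open scoped ENNReal

/-- Partial derivative of `u` in the `x` direction (junk value where `u` is not
differentiable). -/
noncomputable def ux (u : ℝ × ℝ → ℝ) (z : ℝ × ℝ) : ℝ := fderiv ℝ u z (1, 0)

/-- Partial derivative of `u` in the `y` direction. -/
noncomputable def uy (u : ℝ × ℝ → ℝ) (z : ℝ × ℝ) : ℝ := fderiv ℝ u z (0, 1)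

/-- Directional derivative of `u` in the direction `h`. -/
noncomputable def uh (h : ℝ × ℝ) (u : ℝ × ℝ → ℝ) (z : ℝ × ℝ) : ℝ := fderiv ℝ u z h

/-- The class `𝒰_Ω`: continuous concave functions on `Ω` vanishing on the boundary,
with uniformly bounded gradient over all interior points where it exists. -/
def MemU (Ω : Set (ℝ × ℝ)) (u : ℝ × ℝ → ℝ) : Prop :=
  ContinuousOn u Ω ∧ ConcaveOn ℝ Ω u ∧ (∀ z ∈ frontier Ω, u z = 0) ∧
    ∃ C : ℝ, ∀ z ∈ interior Ω, ∀ g : (ℝ × ℝ) →L[ℝ] ℝ, HasFDerivAt u g z → ‖g‖ ≤ C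

/-- The `L¹` norm of `f` over `Ω`. -/
noncomputable def L1N (Ω : Set (ℝ × ℝ)) (f : ℝ × ℝ → ℝ) : ℝ := ∫ z in Ω, |f z|

/-- The `L^p` norm of `f` over `Ω`, `p ∈ [1, ∞)`. -/
noncomputable def LpN (Ω : Set (ℝ × ℝ)) (p : ℝ) (f : ℝ × ℝ → ℝ) : ℝ :=
  (∫ z in Ω, |f z| ^ p) ^ (1 / p)

/-- The `L^∞` norm (essential supremum) of `f` over `Ω`. -/
noncomputable def LinfN (Ω : Set (ℝ × ℝ)) (f : ℝ × ℝ → ℝ) : ℝ≥0∞ :=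
  essSup (fun z => ENNReal.ofReal |f z|) (volume.restrict Ω)

/-- The width of `Ω` parallel to the (Euclidean unit) vector `h`: the distance between the
two lines of support of `Ω` parallel to `h`, i.e. the oscillation over `Ω` of the linear
functional given by the unit normal `(-h.2, h.1)` to `h`. -/
noncomputable def widthPar (Ω : Set (ℝ × ℝ)) (h : ℝ × ℝ) : ℝ :=
  sSup ((fun z : ℝ × ℝ => -h.2 * z.1 + h.1 * z.2) '' Ω) -
    sInf ((fun z : ℝ × ℝ => -h.2 * z.1 + h.1 * z.2) '' Ω)

/-- The closed unit disc in `ℝ × ℝ`. -/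
abbrev unitDisc : Set (ℝ × ℝ) := {z : ℝ × ℝ | z.1 ^ 2 + z.2 ^ 2 ≤ 1}

/-! ### One-dimensional total variation -/

/-- Fundamental theorem of calculus for a monotone function with right derivatives. -/
theorem integral_abs_deriv_of_monotoneOn {f f' r : ℝ → ℝ} {a b : ℝ} (hab : a ≤ b)
    (hcont : ContinuousOn f (Icc a b)) (hmono : MonotoneOn f (Icc a b))
    (hr : ∀ x ∈ Ioo a b, HasDerivWithinAt f (r x) (Ioi x) x)
    (hf' : ∀ᵐ x, x ∈ Ioo a b → HasDerivAt f (f' x) x) :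
    IntervalIntegrable (fun x => |f' x|) volume a b ∧ ∫ x in a..b, |f' x| = f b - f a := by
  have hr0 : ∀ x ∈ Ioo a b, 0 ≤ r x := by
    intro x hx
    have h2 : HasDerivWithinAt f (r x) (Ico x b) x :=
      (hasDerivWithinAt_Ioi_iff_Ici.1 (hr x hx)).mono Ico_subset_Ici_self
    have hm : MonotoneOn f (Ico x b) :=
      hmono.mono fun t ht => ⟨hx.1.le.trans ht.1, ht.2.le⟩
    rw [← h2.derivWithin (uniqueDiffOn_Ico x b x ⟨le_rfl, hx.2⟩)]
    exact hm.derivWithin_nonneg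
  have hint : IntervalIntegrable r volume a b := by
    rw [intervalIntegrable_iff_integrableOn_Ioc_of_le hab]
    exact intervalIntegral.integrableOn_deriv_right_of_nonneg hcont hr hr0
  have hae : ∀ᵐ x, x ∈ Ioo a b → r x = |f' x| := by
    filter_upwards [hf'] with x hx hxm
    have : r x = f' x :=
      (uniqueDiffOn_Ici x x self_mem_Ici).eq_deriv _
        (hasDerivWithinAt_Ioi_iff_Ici.1 (hr x hxm)) ((hx hxm).hasDerivWithinAt)
    rw [← this, abs_of_nonneg (hr0 x hxm)]
  have hae' : r =ᵐ[volume.restrict (Ioc a b)] fun x => |f' x| := by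
    rw [← restrict_Ioo_eq_restrict_Ioc]
    exact (ae_restrict_iff' measurableSet_Ioo).2 hae
  refine ⟨hint.congr_ae (by rwa [uIoc_of_le hab]), ?_⟩
  rw [← intervalIntegral.integral_eq_sub_of_hasDeriv_right_of_le hab hcont hr hint,
    intervalIntegral.integral_of_le hab, intervalIntegral.integral_of_le hab]
  exact (integral_congr_ae hae').symm

/-- The total variation of a concave function vanishing at the endpoints is twice its maximum. -/
theorem ConcaveOn.exists_integral_abs_deriv {g g' : ℝ → ℝ} {s : ℝ} (hs : 0 ≤ s)
    (hg : ConcaveOn ℝ (Icc (-s) s) g) (hcont : ContinuousOn g (Icc (-s) s))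
    (hl : g (-s) = 0) (hr : g s = 0)
    (hg' : ∀ᵐ x, x ∈ Ioo (-s) s → HasDerivAt g (g' x) x) :
    ∃ m ∈ Icc (-s) s, IsMaxOn g (Icc (-s) s) m ∧ ∫ x in (-s)..s, |g' x| = 2 * g m := by
  obtain ⟨m, hm, hmax⟩ := isCompact_Icc.exists_isMaxOn (nonempty_Icc.2 (by linarith)) hcont
  refine ⟨m, hm, hmax, ?_⟩
  have hrd : ∀ x ∈ Ioo (-s) s,
      HasDerivWithinAt (-g) (derivWithin (-g) (Ioi x) x) (Ioi x) x := fun x hx =>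
    hg.neg.hasDerivWithinAt_rightDeriv_of_mem_interior (by rwa [interior_Icc])
  have hrd' : ∀ x ∈ Ioo (-s) s,
      HasDerivWithinAt g (-derivWithin (-g) (Ioi x) x) (Ioi x) x := fun x hx => by
    simpa using (hrd x hx).neg
  have h1 := integral_abs_deriv_of_monotoneOn (f := g) (f' := g') hm.1
    (hcont.mono (Icc_subset_Icc_right hm.2))
    (fun x hx y hy hxy => by
      have := hg.min_le_of_mem_Icc (x := x) (y := m) ⟨hx.1, hx.2.trans hm.2⟩ hm ⟨hxy, hy.2⟩
      rwa [min_eq_left (hmax ⟨hx.1, hx.2.trans hm.2⟩)] at this)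
    (fun x hx => hrd' x ⟨hx.1, hx.2.trans_le hm.2⟩)
    (hg'.mono fun x hx hxm => hx ⟨hxm.1, hxm.2.trans_le hm.2⟩)
  have h2 := integral_abs_deriv_of_monotoneOn (f := -g) (f' := -g') hm.2
    (hcont.mono (Icc_subset_Icc_left hm.1)).neg
    (fun x hx y hy hxy => by
      have := hg.min_le_of_mem_Icc (x := m) (y := y) hm ⟨hm.1.trans hy.1, hy.2⟩ ⟨hx.1, hxy⟩
      rw [min_eq_right (hmax ⟨hm.1.trans hy.1, hy.2⟩)] at this
      simpa using this)
    (fun x hx => hrd x ⟨hm.1.trans_lt hx.1, hx.2⟩)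
    (hg'.mono fun x hx hxm => (hx ⟨hm.1.trans_lt hxm.1, hxm.2⟩).neg)
  simp only [Pi.neg_apply, abs_neg] at h2
  rw [← intervalIntegral.integral_add_adjacent_intervals h1.1 h2.1, h1.2, h2.2, hl, hr]
  ring

/-! ### The unit disc -/

theorem isCompact_unitDisc : IsCompact unitDisc := by
  refine Metric.isCompact_of_isClosed_isBounded
    (isClosed_le (by fun_prop) continuous_const) ?_
  refine (Metric.isBounded_closedBall (x := (0 : ℝ × ℝ)) (r := 1)).subset fun z hz => ?_
  have hz' : z.1 ^ 2 + z.2 ^ 2 ≤ 1 := hz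
  rw [mem_closedBall_zero_iff, Prod.norm_def, max_le_iff, Real.norm_eq_abs, Real.norm_eq_abs]
  exact ⟨abs_le_one_iff_mul_self_le_one.2 (by nlinarith [sq_nonneg z.2]),
    abs_le_one_iff_mul_self_le_one.2 (by nlinarith [sq_nonneg z.1])⟩

theorem convexOn_sq_add_sq : ConvexOn ℝ univ fun z : ℝ × ℝ => z.1 ^ 2 + z.2 ^ 2 :=
  ((even_two.convexOn_pow (𝕜 := ℝ)).comp_linearMap (LinearMap.fst ℝ ℝ ℝ)).add
    ((even_two.convexOn_pow (𝕜 := ℝ)).comp_linearMap (LinearMap.snd ℝ ℝ ℝ))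

theorem convex_unitDisc : Convex ℝ unitDisc := by
  simpa using convexOn_sq_add_sq.convex_le 1

theorem mem_interior_unitDisc {z : ℝ × ℝ} (hz : z.1 ^ 2 + z.2 ^ 2 < 1) :
    z ∈ interior unitDisc :=
  interior_maximal (s := unitDisc) (t := {w : ℝ × ℝ | w.1 ^ 2 + w.2 ^ 2 < 1})
    (fun w hw => (show w.1 ^ 2 + w.2 ^ 2 < 1 from hw).le) (isOpen_lt (by fun_prop) continuous_const) hz

theorem mem_frontier_unitDisc {z : ℝ × ℝ} (hz : z.1 ^ 2 + z.2 ^ 2 = 1) :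
    z ∈ frontier unitDisc := by
  rw [isCompact_unitDisc.isClosed.frontier_eq]
  refine ⟨hz.le, fun hi => ?_⟩
  have hc : ContinuousAt (fun t : ℝ => t • z) 1 := by fun_prop
  have hn : ∀ᶠ t in nhds (1 : ℝ), t • z ∈ unitDisc :=
    hc (by simpa using mem_interior_iff_mem_nhds.1 hi)
  obtain ⟨t, ht, ht1⟩ := ((hn.filter_mono nhdsWithin_le_nhds).and
    (self_mem_nhdsWithin (s := Ioi (1 : ℝ)))).exists
  have h1 : (t * z.1) ^ 2 + (t * z.2) ^ 2 ≤ 1 := by simpa using ht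
  have h2 : (1 : ℝ) < t := ht1
  have h3 : t ^ 2 * (z.1 ^ 2 + z.2 ^ 2) ≤ 1 := by linarith
  rw [hz] at h3
  nlinarith

theorem frontier_unitDisc_subset : frontier unitDisc ⊆ {z | z.1 ^ 2 + z.2 ^ 2 = 1} :=
  frontier_le_subset_eq (by fun_prop) continuous_const

theorem mem_unitDisc_iff_mem_Icc {x y : ℝ} (hx : x ^ 2 ≤ 1) :
    (x, y) ∈ unitDisc ↔ y ∈ Icc (-√(1 - x ^ 2)) (√(1 - x ^ 2)) := by
  rw [mem_Icc, ← abs_le, Real.le_sqrt (abs_nonneg y) (by linarith), sq_abs, mem_ofPred_eq]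
  constructor <;> intro h <;> linarith

/-! ### Slicing -/

theorem ConcaveOn.ae_differentiableAt {Ω : Set (ℝ × ℝ)} {u : ℝ × ℝ → ℝ}
    (hu : ConcaveOn ℝ Ω u) : ∀ᵐ z, z ∈ interior Ω → DifferentiableAt ℝ u z := by
  have hL := hu.locallyLipschitzOn_interior
  have h0 : volume (interior Ω ∩ {w | ¬ DifferentiableAt ℝ u w}) = 0 := by
    refine measure_null_of_locally_null _ fun z hz => ?_
    obtain ⟨K, t, ht, hK⟩ := hL hz.1
    rw [isOpen_interior.nhdsWithin_eq hz.1] at ht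
    refine ⟨interior t ∩ (interior Ω ∩ {w | ¬ DifferentiableAt ℝ u w}),
      Filter.inter_mem (nhdsWithin_le_nhds (interior_mem_nhds.2 ht)) self_mem_nhdsWithin, ?_⟩
    refine measure_mono_null ?_
      ((hK.mono interior_subset).ae_differentiableWithinAt_of_mem (μ := volume))
    rintro w ⟨hwt, -, hw⟩ hcon
    exact hw ((hcon hwt).differentiableAt (isOpen_interior.mem_nhds hwt))
  rw [ae_iff]
  convert h0 using 2
  ext w
  simp

theorem MemU.integrableOn_uy {u : ℝ × ℝ → ℝ} (hu : MemU unitDisc u) :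
    IntegrableOn (fun z => |uy u z|) unitDisc := by
  obtain ⟨-, -, -, C, hC⟩ := hu
  have hm : Measurable fun z => |uy u z| :=
    (measurable_fderiv_apply_const ℝ u (0, 1)).abs
  refine Measure.integrableOn_of_bounded (M := max C 0)
    isCompact_unitDisc.measure_lt_top.ne hm.aestronglyMeasurable ?_
  rw [← Measure.restrict_congr_set
    (interior_ae_eq_of_null_frontier (convex_unitDisc.addHaar_frontier volume))]
  refine ae_restrict_of_forall_mem isOpen_interior.measurableSet fun z hz => ?_
  rw [Real.norm_eq_abs, abs_abs, uy]
  by_cases hd : DifferentiableAt ℝ u z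
  · refine le_max_of_le_left (le_trans ?_ (hC z hz _ hd.hasFDerivAt))
    simpa using (fderiv ℝ u z).le_opNorm (0, 1)
  · simp [fderiv_zero_of_not_differentiableAt hd]

/-- The `L¹` norm of `u_y` is the integral over vertical slices of twice the maximum of `u`
on the slice. -/
theorem MemU.exists_slice_uy {u : ℝ × ℝ → ℝ} (hu : MemU unitDisc u) :
    ∃ F : ℝ → ℝ, IntegrableOn F (Ioo (-1) 1) ∧
      L1N unitDisc (uy u) = ∫ x in Ioo (-1) 1, F x ∧
      ∀ᵐ x ∂volume.restrict (Ioo (-1 : ℝ) 1),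
        (∃ y, (x, y) ∈ unitDisc ∧ F x = 2 * u (x, y)) ∧
        ∀ y, (x, y) ∈ unitDisc → 2 * u (x, y) ≤ F x := by
  have hint := hu.integrableOn_uy
  obtain ⟨hcont, hconc, hzero, -⟩ := hu
  have hmeas : MeasurableSet unitDisc := isCompact_unitDisc.measurableSet
  set f : ℝ × ℝ → ℝ := unitDisc.indicator fun z => |uy u z| with hf
  have hfint : Integrable f (volume.prod volume) := by
    rw [← Measure.volume_eq_prod]
    exact (integrable_indicator_iff hmeas).2 hint
  refine ⟨fun x => ∫ y, f (x, y), hfint.integral_prod_left.integrableOn, ?_, ?_⟩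
  · rw [L1N, ← integral_indicator hmeas, Measure.volume_eq_prod, integral_prod _ hfint,
      ← integral_Icc_eq_integral_Ioo]
    refine (setIntegral_eq_integral_of_forall_compl_eq_zero fun x hx => ?_).symm
    have : ∀ y, f (x, y) = 0 := fun y => indicator_of_notMem (fun h => hx ?_) _
    · simp [this]
    · have h' : x ^ 2 + y ^ 2 ≤ 1 := h
      exact abs_le.1 (abs_le_one_iff_mul_self_le_one.2 (by nlinarith [sq_nonneg y]))
  · rw [ae_restrict_iff' measurableSet_Ioo]
    have hd := hconc.ae_differentiableAt
    rw [Measure.volume_eq_prod] at hd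
    filter_upwards [Measure.ae_ae_of_ae_prod hd] with x hx hxm
    have hx1 : x ^ 2 < 1 := by nlinarith [hxm.1, hxm.2]
    set s := √(1 - x ^ 2) with hs
    have hs2 : s ^ 2 = 1 - x ^ 2 := Real.sq_sqrt (by linarith)
    have hs0 : 0 ≤ s := Real.sqrt_nonneg _
    have hmem : ∀ y, (x, y) ∈ unitDisc ↔ y ∈ Icc (-s) s := fun y =>
      mem_unitDisc_iff_mem_Icc hx1.le
    have hF : ∫ y, f (x, y) = ∫ y in (-s)..s, |uy u (x, y)| := by
      rw [intervalIntegral.integral_of_le (by linarith), ← integral_Icc_eq_integral_Ioc,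
        ← integral_indicator measurableSet_Icc]
      refine integral_congr_ae (Filter.Eventually.of_forall fun y => ?_)
      by_cases hy : y ∈ Icc (-s) s
      · simp only [hf, indicator_of_mem hy, indicator_of_mem ((hmem y).2 hy)]
      · simp only [hf, indicator_of_notMem hy, indicator_of_notMem (mt (hmem y).1 hy)]
    have hmaps : MapsTo (fun y : ℝ => (x, y)) (Icc (-s) s) unitDisc := fun y hy => (hmem y).2 hy
    obtain ⟨m, hm, hmax, hI⟩ := ConcaveOn.exists_integral_abs_deriv
      (g := fun y => u (x, y)) (g' := fun y => uy u (x, y)) hs0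
      ⟨convex_Icc _ _, fun y hy z hz a b ha hb hab => by
        have := hconc.2 (hmaps hy) (hmaps hz) ha hb hab
        simpa [← add_mul, hab] using this⟩
      (hcont.comp (by fun_prop) hmaps)
      (hzero _ (mem_frontier_unitDisc (by simp [hs2])))
      (hzero _ (mem_frontier_unitDisc (by simp [hs2])))
      (by
        filter_upwards [hx] with y hy hys
        have hi : (x, y) ∈ interior unitDisc :=
          mem_interior_unitDisc (by simp only; nlinarith [hys.1, hys.2])
        have h1 : HasDerivAt (fun y : ℝ => (x, y)) ((0 : ℝ), (1 : ℝ)) y :=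
          (hasDerivAt_const y x).prodMk (hasDerivAt_id y)
        exact (hy hi).hasFDerivAt.comp_hasDerivAt y h1)
    refine ⟨⟨m, hmaps hm, by rw [hF, hI]⟩, fun y hy => ?_⟩
    rw [hF, hI]
    have : u (x, y) ≤ u (x, m) := hmax ((hmem y).1 hy)
    linarith

theorem swap_mem_unitDisc {z : ℝ × ℝ} : z.swap ∈ unitDisc ↔ z ∈ unitDisc := by
  simp only [mem_ofPred_eq, Prod.fst_swap, Prod.snd_swap, add_comm]

theorem preimage_swap_unitDisc : Prod.swap ⁻¹' unitDisc = unitDisc :=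
  ext fun _ => swap_mem_unitDisc

theorem hasFDerivAt_comp_swap {u : ℝ × ℝ → ℝ} {g : ℝ × ℝ →L[ℝ] ℝ} {z : ℝ × ℝ}
    (h : HasFDerivAt (u ∘ Prod.swap) g z) :
    HasFDerivAt u (g.comp (ContinuousLinearEquiv.prodComm ℝ ℝ ℝ : ℝ × ℝ →L[ℝ] ℝ × ℝ)) z.swap := by
  have h' : HasFDerivAt (u ∘ Prod.swap) g z.swap.swap := by simpa using h
  exact h'.comp z.swap (ContinuousLinearEquiv.prodComm ℝ ℝ ℝ).hasFDerivAt

theorem MemU.comp_swap {u : ℝ × ℝ → ℝ} (hu : MemU unitDisc u) :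
    MemU unitDisc (u ∘ Prod.swap) := by
  obtain ⟨hcont, hconc, hzero, C, hC⟩ := hu
  have hmaps : MapsTo Prod.swap unitDisc unitDisc := fun z hz => swap_mem_unitDisc.2 hz
  refine ⟨hcont.comp continuous_swap.continuousOn hmaps,
    ⟨hconc.1, fun y hy z hz a b ha hb hab => hconc.2 (hmaps hy) (hmaps hz) ha hb hab⟩,
    fun z hz => hzero _ (mem_frontier_unitDisc ?_), C, fun z hz g hg => ?_⟩
  · have : z.1 ^ 2 + z.2 ^ 2 = 1 := frontier_unitDisc_subset hz
    simpa [add_comm] using this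
  · have hz' : z.swap ∈ interior unitDisc := by
      have := (Homeomorph.prodComm ℝ ℝ).preimage_interior unitDisc
      simp only [Homeomorph.coe_prodComm, preimage_swap_unitDisc] at this
      rwa [← this] at hz
    refine le_trans (ContinuousLinearMap.opNorm_le_bound _ (norm_nonneg _) fun v => ?_)
      (hC _ hz' _ (hasFDerivAt_comp_swap hg))
    have h := (g.comp (ContinuousLinearEquiv.prodComm ℝ ℝ ℝ :
      ℝ × ℝ →L[ℝ] ℝ × ℝ)).le_opNorm v.swap
    have hn : ‖v.swap‖ = ‖v‖ := by simp [Prod.norm_def, max_comm]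
    rw [hn] at h
    simpa using h

theorem uy_comp_swap (u : ℝ × ℝ → ℝ) (z : ℝ × ℝ) : uy (u ∘ Prod.swap) z = ux u z.swap := by
  have := (ContinuousLinearEquiv.prodComm ℝ ℝ ℝ).comp_right_fderiv (f := u) (x := z)
  have h2 : fderiv ℝ (u ∘ Prod.swap) z = (fderiv ℝ u z.swap).comp
    (ContinuousLinearEquiv.prodComm ℝ ℝ ℝ : ℝ × ℝ →L[ℝ] ℝ × ℝ) := this
  simp [uy, ux, h2]

theorem L1N_uy_comp_swap (u : ℝ × ℝ → ℝ) :
    L1N unitDisc (uy (u ∘ Prod.swap)) = L1N unitDisc (ux u) := by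
  have hp : MeasurePreserving (Prod.swap : ℝ × ℝ → ℝ × ℝ) volume volume :=
    Measure.measurePreserving_swap
  have h := hp.setIntegral_preimage_emb MeasurableEquiv.prodComm.measurableEmbedding
    (fun z => |ux u z|) unitDisc
  rw [preimage_swap_unitDisc] at h
  simp only [L1N, uy_comp_swap, h]

theorem MemU.exists_slice_ux {u : ℝ × ℝ → ℝ} (hu : MemU unitDisc u) :
    ∃ F : ℝ → ℝ, IntegrableOn F (Ioo (-1) 1) ∧
      L1N unitDisc (ux u) = ∫ y in Ioo (-1) 1, F y ∧
      ∀ᵐ y ∂volume.restrict (Ioo (-1 : ℝ) 1),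
        (∃ x, (x, y) ∈ unitDisc ∧ F y = 2 * u (x, y)) ∧
        ∀ x, (x, y) ∈ unitDisc → 2 * u (x, y) ≤ F y := by
  obtain ⟨F, hF, hI, hae⟩ := hu.comp_swap.exists_slice_uy
  refine ⟨F, hF, (L1N_uy_comp_swap u).symm.trans hI, hae.mono fun y hy => ⟨?_, fun x hx => ?_⟩⟩
  · obtain ⟨x, hx, h⟩ := hy.1
    exact ⟨x, swap_mem_unitDisc.2 hx, h⟩
  · exact hy.2 x (swap_mem_unitDisc.2 hx)

/-! ### The strict inequality -/

theorem MemU.nonneg {u : ℝ × ℝ → ℝ} (hu : MemU unitDisc u) {z : ℝ × ℝ} (hz : z ∈ unitDisc) :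
    0 ≤ u z := by
  obtain ⟨-, hconc, hzero, -⟩ := hu
  obtain ⟨x, y⟩ := z
  have hz' : x ^ 2 + y ^ 2 ≤ 1 := hz
  have hx : x ^ 2 ≤ 1 := by nlinarith [sq_nonneg y]
  have hs : √(1 - x ^ 2) ^ 2 = 1 - x ^ 2 := Real.sq_sqrt (by linarith)
  have hl : x ^ 2 + (-√(1 - x ^ 2)) ^ 2 = 1 := by rw [neg_sq]; linarith
  have hr : x ^ 2 + √(1 - x ^ 2) ^ 2 = 1 := by linarith
  have hseg : (x, y) ∈ segment ℝ (x, -√(1 - x ^ 2)) (x, √(1 - x ^ 2)) := by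
    rw [← Prod.image_mk_segment_right, segment_eq_Icc (by linarith [Real.sqrt_nonneg (1 - x ^ 2)])]
    exact ⟨y, (mem_unitDisc_iff_mem_Icc hx).1 hz, rfl⟩
  have h := hconc.ge_on_segment (x := (x, -√(1 - x ^ 2))) (y := (x, √(1 - x ^ 2)))
    hl.le hr.le hseg
  rwa [hzero _ (mem_frontier_unitDisc hl), hzero _ (mem_frontier_unitDisc hr), min_self] at h

theorem MemU.sq_add_sq_lt_one {u : ℝ × ℝ → ℝ} (hu : MemU unitDisc u) {z : ℝ × ℝ}
    (hz : z ∈ unitDisc) (hpos : 0 < u z) : z.1 ^ 2 + z.2 ^ 2 < 1 :=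
  lt_of_le_of_ne hz fun h => hpos.ne' (hu.2.2.1 z (mem_frontier_unitDisc h))

/-- If `u ≤ H` on the disc with `0 < H`, then `‖u_x‖₁ < 4 H`. -/
theorem MemU.L1N_ux_lt {u : ℝ × ℝ → ℝ} (hu : MemU unitDisc u) {H : ℝ} (hH : 0 < H)
    (hle : ∀ z ∈ unitDisc, u z ≤ H) : L1N unitDisc (ux u) < 4 * H := by
  obtain ⟨F, hF, hI, hae⟩ := hu.exists_slice_ux
  obtain ⟨c, hc1, hc, hcK⟩ : ∃ c : ℝ, -1 ≤ c ∧ c < 1 ∧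
      ∀ z ∈ unitDisc, c < z.2 → u z ≤ H / 2 := by
    set K : Set (ℝ × ℝ) := unitDisc ∩ u ⁻¹' Ici (H / 2) with hK
    have hKc : IsCompact K := isCompact_unitDisc.of_isClosed_subset
      (hu.1.preimage_isClosed_of_isClosed isCompact_unitDisc.isClosed isClosed_Ici)
      inter_subset_left
    rcases K.eq_empty_or_nonempty with hemp | hne
    · refine ⟨0, by norm_num, by norm_num, fun z hz _ => ?_⟩
      by_contra hcon
      exact (hemp ▸ (show z ∈ K from ⟨hz, (not_le.1 hcon).le⟩) : z ∈ (∅ : Set (ℝ × ℝ)))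
    · obtain ⟨w, hw, hmax⟩ := hKc.exists_isMaxOn hne continuous_snd.continuousOn
      have hw1 := hu.sq_add_sq_lt_one hw.1 ((half_pos hH).trans_le hw.2)
      refine ⟨w.2, by nlinarith [sq_nonneg w.1], by nlinarith [sq_nonneg w.1],
        fun z hz hlt => ?_⟩
      by_contra hcon
      exact hlt.not_ge (hmax (show z ∈ K from ⟨hz, (not_le.1 hcon).le⟩))
  set G : ℝ → ℝ := fun y => 2 * H - (Ioo c 1).indicator (fun _ => H) y with hG
  have hind : Integrable ((Ioo c 1).indicator fun _ => H) (volume.restrict (Ioo (-1 : ℝ) 1)) :=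
    (integrable_const H).indicator measurableSet_Ioo
  have hGint : IntegrableOn G (Ioo (-1) 1) := (integrable_const _).sub hind
  have hFG : ∫ y in Ioo (-1) 1, F y ≤ ∫ y in Ioo (-1) 1, G y := by
    refine integral_mono_ae hF hGint ?_
    filter_upwards [hae, ae_restrict_mem measurableSet_Ioo] with y ⟨⟨x, hx, hxF⟩, _⟩ hy
    rw [hxF]
    by_cases hyc : c < y
    · have : y ∈ Ioo c 1 := ⟨hyc, hy.2⟩
      simp only [hG, indicator_of_mem this]
      linarith [hcK (x, y) hx hyc]
    · have : y ∉ Ioo c 1 := fun h => hyc h.1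
      simp only [hG, indicator_of_notMem this]
      linarith [hle (x, y) hx]
  have hGI : ∫ y in Ioo (-1) 1, G y = 4 * H - (1 - c) * H := by
    rw [integral_sub (integrable_const _) hind, setIntegral_indicator measurableSet_Ioo,
      inter_eq_self_of_subset_right (Ioo_subset_Ioo_left hc1), setIntegral_const,
      setIntegral_const, Real.volume_real_Ioo_of_le (by norm_num),
      Real.volume_real_Ioo_of_le hc.le]
    simp only [smul_eq_mul]
    ring
  rw [hI]
  nlinarith

/-- The `L¹` norm of `u_y` is at least twice any value of `u`. -/
theorem MemU.two_mul_le_L1N_uy {u : ℝ × ℝ → ℝ} (hu : MemU unitDisc u) {z : ℝ × ℝ}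
    (hz : z ∈ unitDisc) (hpos : 0 < u z) : 2 * u z ≤ L1N unitDisc (uy u) := by
  obtain ⟨F, hF, hI, hae⟩ := hu.exists_slice_uy
  have hlt := hu.sq_add_sq_lt_one hz hpos
  have h1 : -1 < z.1 := by nlinarith [sq_nonneg z.2]
  have h2 : z.1 < 1 := by nlinarith [sq_nonneg z.2]
  have hcone : ∀ e : ℝ, e ^ 2 = 1 → ∀ t ∈ Icc (0 : ℝ) 1,
      ∃ y, (t * z.1 + (1 - t) * e, y) ∈ unitDisc ∧ t * u z ≤ u (t * z.1 + (1 - t) * e, y) := by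
    intro e he t ht
    have he' : ((e, 0) : ℝ × ℝ).1 ^ 2 + ((e, 0) : ℝ × ℝ).2 ^ 2 = 1 := by simp [he]
    have hp : t • z + (1 - t) • ((e, 0) : ℝ × ℝ) = (t * z.1 + (1 - t) * e, t * z.2) := by
      ext <;> simp
    refine ⟨t * z.2, ?_, ?_⟩
    · rw [← hp]
      exact convex_unitDisc hz he'.le ht.1 (by linarith [ht.2]) (by ring)
    · have := hu.2.1.2 hz (show ((e, 0) : ℝ × ℝ) ∈ unitDisc from he'.le) ht.1
        (by linarith [ht.2]) (show t + (1 - t) = 1 by ring)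
      rwa [hp, hu.2.2.1 _ (mem_frontier_unitDisc he'), smul_zero, add_zero, smul_eq_mul] at this
  have hFi : IntervalIntegrable F volume (-1) 1 := by
    rwa [intervalIntegrable_iff_integrableOn_Ioo_of_le (by norm_num)]
  have hzI : z.1 ∈ uIcc (-1 : ℝ) 1 := by
    rw [uIcc_of_le (by norm_num)]
    exact ⟨h1.le, h2.le⟩
  have hFl : IntervalIntegrable F volume (-1) z.1 :=
    hFi.mono_set (uIcc_subset_uIcc left_mem_uIcc hzI)
  have hFr : IntervalIntegrable F volume z.1 1 :=
    hFi.mono_set (uIcc_subset_uIcc hzI right_mem_uIcc)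
  have hae' := (ae_restrict_iff' measurableSet_Ioo).1 hae
  have hleft : u z * (z.1 + 1) ≤ ∫ x in (-1)..z.1, F x := by
    have hcalc : ∫ x in (-1)..z.1, 2 * u z / (z.1 + 1) * (x + 1) = u z * (z.1 + 1) := by
      rw [intervalIntegral.integral_const_mul, intervalIntegral.integral_add (by simp) (by simp)]
      simp only [integral_id, intervalIntegral.integral_const, smul_eq_mul]
      have : z.1 + 1 ≠ 0 := by linarith
      field_simp
      ring
    rw [← hcalc]
    refine intervalIntegral.integral_mono_ae_restrict h1.le
      (Continuous.intervalIntegrable (by fun_prop) _ _) hFl ?_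
    rw [← restrict_Ioo_eq_restrict_Icc]
    filter_upwards [ae_restrict_of_ae hae', ae_restrict_mem measurableSet_Ioo] with x hx hxm
    obtain ⟨y, hy, hyu⟩ := hcone (-1) (by norm_num) ((x + 1) / (z.1 + 1))
      ⟨div_nonneg (by linarith [hxm.1]) (by linarith),
        (div_le_one (by linarith)).2 (by linarith [hxm.2])⟩
    have hxe : (x + 1) / (z.1 + 1) * z.1 + (1 - (x + 1) / (z.1 + 1)) * (-1) = x := by
      have : z.1 + 1 ≠ 0 := by linarith
      field_simp
      ring
    rw [hxe] at hy hyu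
    refine le_trans (le_of_eq ?_) ((mul_le_mul_of_nonneg_left hyu zero_le_two).trans
      ((hx ⟨hxm.1, hxm.2.trans h2⟩).2 y hy))
    ring
  have hright : u z * (1 - z.1) ≤ ∫ x in z.1..1, F x := by
    have hcalc : ∫ x in z.1..1, 2 * u z / (1 - z.1) * (1 - x) = u z * (1 - z.1) := by
      rw [intervalIntegral.integral_const_mul, intervalIntegral.integral_sub (by simp) (by simp)]
      simp only [integral_id, intervalIntegral.integral_const, smul_eq_mul]
      have : 1 - z.1 ≠ 0 := by linarith
      field_simp
      ring
    rw [← hcalc]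
    refine intervalIntegral.integral_mono_ae_restrict h2.le
      (Continuous.intervalIntegrable (by fun_prop) _ _) hFr ?_
    rw [← restrict_Ioo_eq_restrict_Icc]
    filter_upwards [ae_restrict_of_ae hae', ae_restrict_mem measurableSet_Ioo] with x hx hxm
    obtain ⟨y, hy, hyu⟩ := hcone 1 (by norm_num) ((1 - x) / (1 - z.1))
      ⟨div_nonneg (by linarith [hxm.2]) (by linarith),
        (div_le_one (by linarith)).2 (by linarith [hxm.1])⟩
    have hxe : (1 - x) / (1 - z.1) * z.1 + (1 - (1 - x) / (1 - z.1)) * 1 = x := by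
      have : 1 - z.1 ≠ 0 := by linarith
      field_simp
      ring
    rw [hxe] at hy hyu
    refine le_trans (le_of_eq ?_) ((mul_le_mul_of_nonneg_left hyu zero_le_two).trans
      ((hx ⟨h1.trans hxm.1, hxm.2⟩).2 y hy))
    ring
  have hsum := intervalIntegral.integral_add_adjacent_intervals hFl hFr
  rw [hI, ← integral_Ioc_eq_integral_Ioo, ← intervalIntegral.integral_of_le (by norm_num), ← hsum]
  linarith

theorem MemU.L1N_ux_lt_two_mul {u : ℝ × ℝ → ℝ} (hu : MemU unitDisc u)
    (hne : ∃ z ∈ unitDisc, u z ≠ 0) :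
    0 < L1N unitDisc (uy u) ∧ L1N unitDisc (ux u) < 2 * L1N unitDisc (uy u) := by
  obtain ⟨w, hw, hw0⟩ := hne
  obtain ⟨z, hz, hmax⟩ := isCompact_unitDisc.exists_isMaxOn ⟨w, hw⟩ hu.1
  have hpos : 0 < u z := ((hu.nonneg hw).lt_of_ne' hw0).trans_le (hmax hw)
  have h1 := hu.L1N_ux_lt hpos fun v hv => hmax hv
  have h2 := hu.two_mul_le_L1N_uy hz hpos
  constructor <;> linarith

/-! ### A maximizing family -/

/-- The concave function `min (1 - |x|) (k (1 - x² - y²))`. -/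
noncomputable def cappedTent (k : ℝ) (z : ℝ × ℝ) : ℝ :=
  min (1 - |z.1|) (k * (1 - (z.1 ^ 2 + z.2 ^ 2)))

theorem memU_cappedTent {k : ℝ} (hk : 0 ≤ k) : MemU unitDisc (cappedTent k) := by
  have hLip : LocallyLipschitz (cappedTent k) := by
    refine LocallyLipschitz.min ?_ ?_
    · exact ((LipschitzWith.const (1 : ℝ)).sub
        (lipschitzWith_one_norm.comp LipschitzWith.prod_fst)).locallyLipschitz
    · exact ContDiff.locallyLipschitz (𝕂 := ℝ) (by fun_prop)
  have hconc : ConcaveOn ℝ univ (cappedTent k) := by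
    refine ConcaveOn.inf ?_ ?_
    · have h := (concaveOn_const (1 : ℝ) convex_univ).sub
        ((convexOn_norm (E := ℝ) convex_univ).comp_linearMap (LinearMap.fst ℝ ℝ ℝ))
      exact h
    · have h := ((concaveOn_const (1 : ℝ) convex_univ).sub convexOn_sq_add_sq).smul hk
      exact h
  obtain ⟨C, hC⟩ := (hLip.locallyLipschitzOn (s := unitDisc)).exists_lipschitzOnWith_of_compact
    isCompact_unitDisc
  refine ⟨hLip.continuous.continuousOn, hconc.subset (subset_univ _) convex_unitDisc,
    fun z hz => ?_, C, fun z hz g hg => ?_⟩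
  · have h : z.1 ^ 2 + z.2 ^ 2 = 1 := frontier_unitDisc_subset hz
    have : |z.1| ≤ 1 := abs_le_one_iff_mul_self_le_one.2 (by nlinarith [sq_nonneg z.2])
    simp [cappedTent, h, this]
  · exact hg.le_of_lipschitzOn (mem_interior_iff_mem_nhds.1 hz) hC

theorem L1N_uy_cappedTent_le {k : ℝ} (hk : 0 ≤ k) : L1N unitDisc (uy (cappedTent k)) ≤ 2 := by
  obtain ⟨F, hF, hI, hae⟩ := (memU_cappedTent hk).exists_slice_uy
  have hcont : Continuous fun x : ℝ => 2 * (1 - |x|) := by fun_prop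
  have hcalc : ∫ x in Ioo (-1 : ℝ) 1, 2 * (1 - |x|) = 2 := by
    rw [← integral_Ioc_eq_integral_Ioo, ← intervalIntegral.integral_of_le (by norm_num),
      ← intervalIntegral.integral_add_adjacent_intervals (b := 0)
        (hcont.intervalIntegrable _ _) (hcont.intervalIntegrable _ _)]
    have hl : ∫ x in (-1 : ℝ)..0, 2 * (1 - |x|) = ∫ x in (-1 : ℝ)..0, 2 * (1 + x) :=
      intervalIntegral.integral_congr fun x hx => by
        rw [uIcc_of_le (by norm_num)] at hx
        simp only [abs_of_nonpos hx.2, sub_neg_eq_add]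
    have hr : ∫ x in (0 : ℝ)..1, 2 * (1 - |x|) = ∫ x in (0 : ℝ)..1, 2 * (1 - x) :=
      intervalIntegral.integral_congr fun x hx => by
        rw [uIcc_of_le (by norm_num)] at hx
        simp only [abs_of_nonneg hx.1]
    rw [hl, hr, intervalIntegral.integral_const_mul, intervalIntegral.integral_const_mul,
      intervalIntegral.integral_add (by simp) (by simp),
      intervalIntegral.integral_sub (by simp) (by simp)]
    simp only [integral_id, intervalIntegral.integral_const, smul_eq_mul]
    norm_num
  rw [hI, ← hcalc]
  refine integral_mono_ae hF (hcont.integrableOn_Icc.mono_set Ioo_subset_Icc_self) ?_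
  filter_upwards [hae] with x ⟨⟨y, _, hy⟩, _⟩
  rw [hy]
  exact mul_le_mul_of_nonneg_left (min_le_left _ _) zero_le_two

theorem le_L1N_ux_cappedTent {k a : ℝ} (hk : 0 ≤ k) (ha0 : 0 ≤ a) (ha1 : a < 1)
    (hka : 1 ≤ k * (1 - a ^ 2)) : 4 * a ≤ L1N unitDisc (ux (cappedTent k)) := by
  have hu := memU_cappedTent hk
  obtain ⟨F, hF, hI, hae⟩ := hu.exists_slice_ux
  have hcalc : ∫ y in Ioo (-1 : ℝ) 1, (Icc (-a) a).indicator (fun _ => (2 : ℝ)) y = 4 * a := by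
    rw [setIntegral_indicator measurableSet_Icc, inter_eq_self_of_subset_right
      (Icc_subset_Ioo (by linarith) ha1), setIntegral_const,
      Real.volume_real_Icc_of_le (by linarith), smul_eq_mul]
    ring
  rw [hI, ← hcalc]
  refine integral_mono_ae ((integrable_const _).indicator measurableSet_Icc) hF ?_
  filter_upwards [hae] with y ⟨⟨x, hx, hxF⟩, hge⟩
  by_cases hy : y ∈ Icc (-a) a
  · rw [indicator_of_mem hy]
    have hya : y ^ 2 ≤ a ^ 2 := sq_le_sq' hy.1 hy.2
    have h0 : ((0 : ℝ), y) ∈ unitDisc := by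
      change (0 : ℝ) ^ 2 + y ^ 2 ≤ 1
      nlinarith
    have h1 : (1 : ℝ) ≤ cappedTent k (0, y) := by
      refine le_min (by simp) ?_
      simp only
      nlinarith
    linarith [hge 0 h0]
  · rw [indicator_of_notMem hy, hxF]
    exact mul_nonneg zero_le_two (hu.nonneg hx)

/-- Example 1: for the closed unit disc, the supremum of
`‖u_x‖₁ / ‖u_y‖₁` over nonzero `u ∈ 𝒰_Ω` equals `2`, and it is not attained. -/
theorem stmt_11 :
    sSup {r : ℝ | ∃ u : ℝ × ℝ → ℝ,
        MemU {z : ℝ × ℝ | z.1 ^ 2 + z.2 ^ 2 ≤ 1} u ∧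
        (∃ z ∈ {z : ℝ × ℝ | z.1 ^ 2 + z.2 ^ 2 ≤ 1}, u z ≠ 0) ∧
        r = L1N {z : ℝ × ℝ | z.1 ^ 2 + z.2 ^ 2 ≤ 1} (ux u) /
          L1N {z : ℝ × ℝ | z.1 ^ 2 + z.2 ^ 2 ≤ 1} (uy u)} = 2 ∧
    ∀ u : ℝ × ℝ → ℝ, MemU {z : ℝ × ℝ | z.1 ^ 2 + z.2 ^ 2 ≤ 1} u →
      (∃ z ∈ {z : ℝ × ℝ | z.1 ^ 2 + z.2 ^ 2 ≤ 1}, u z ≠ 0) →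
      L1N {z : ℝ × ℝ | z.1 ^ 2 + z.2 ^ 2 ≤ 1} (ux u) /
        L1N {z : ℝ × ℝ | z.1 ^ 2 + z.2 ^ 2 ≤ 1} (uy u) ≠ 2 := by
  have hlt : ∀ u : ℝ × ℝ → ℝ, MemU unitDisc u → (∃ z ∈ unitDisc, u z ≠ 0) →
      L1N unitDisc (ux u) / L1N unitDisc (uy u) < 2 := fun u hu hne => by
    obtain ⟨hpos, h⟩ := hu.L1N_ux_lt_two_mul hne
    exact (div_lt_iff₀ hpos).2 h
  have hgt : ∀ w : ℝ, w < 2 → ∃ u : ℝ × ℝ → ℝ, MemU unitDisc u ∧ (∃ z ∈ unitDisc, u z ≠ 0) ∧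
      w < L1N unitDisc (ux u) / L1N unitDisc (uy u) := by
    intro w hw
    obtain ⟨a, ha, ha1⟩ := exists_between (max_lt (by linarith : w / 2 < 1) one_pos)
    have ha0 : 0 < a := (le_max_right _ _).trans_lt ha
    have hwa : w / 2 < a := (le_max_left _ _).trans_lt ha
    have hs : 0 < 1 - a ^ 2 := by nlinarith
    have hk : 0 < (1 - a ^ 2)⁻¹ := inv_pos.2 hs
    have hu := memU_cappedTent hk.le
    have hne : ∃ z ∈ unitDisc, cappedTent (1 - a ^ 2)⁻¹ z ≠ 0 :=
      ⟨0, by simp, by simp [cappedTent, (lt_min one_pos hk).ne']⟩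
    have hx := le_L1N_ux_cappedTent hk.le ha0.le ha1 (inv_mul_cancel₀ hs.ne').ge
    have hy := L1N_uy_cappedTent_le hk.le
    refine ⟨_, hu, hne, (lt_div_iff₀ (hu.L1N_ux_lt_two_mul hne).1).2 ?_⟩
    have hpos := (hu.L1N_ux_lt_two_mul hne).1
    nlinarith
  refine ⟨csSup_eq_of_forall_le_of_forall_lt_exists_gt ?_ ?_ ?_, fun u hu hne => (hlt u hu hne).ne⟩
  · obtain ⟨u, hu, hne, -⟩ := hgt 0 two_pos
    exact ⟨_, u, hu, hne, rfl⟩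
  · rintro r ⟨u, hu, hne, rfl⟩
    exact (hlt u hu hne).le
  · intro w hw
    obtain ⟨u, hu, hne, h⟩ := hgt w hw
    exact ⟨_, ⟨u, hu, hne, rfl⟩, h⟩
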